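/- Let X be a real normed linear space and let x, y ∈ X be nonzero. If p ≥ 0, then (max{‖x‖,‖y‖})^p·α[x,y] − |‖x‖^p − ‖y‖^p| ≤ α_p[x,y] ≤ (min{‖x‖,‖y‖})^p·α[x,y] + |‖x‖^p − ‖y‖^p|. If p < 0, then (min{‖x‖,‖y‖})^p·α[x,y] − |‖x‖^p − ‖y‖^p| ≤ α_p[x,y] ≤ (max{‖x‖,‖y‖})^p·α[x,y] + |‖x‖^p − ‖y‖^p|. -/

import Mathlib

noncomputable def alphaD {X : Type*} [NormedAddCommGroup X] [NormedSpace ℝ X]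
    (p : ℝ) (x y : X) : ℝ :=
  ‖(‖x‖ ^ (p - 1)) • x - (‖y‖ ^ (p - 1)) • y‖

noncomputable def angularD {X : Type*} [NormedAddCommGroup X] [NormedSpace ℝ X]
    (x y : X) : ℝ :=
  ‖‖x‖⁻¹ • x - ‖y‖⁻¹ • y‖

/-!
With `u = x / ‖x‖`, `v = y / ‖y‖`, `a = ‖x‖ ^ p` and `b = ‖y‖ ^ p`, the vectors `a • u - b • v`
and `a • (u - v)`, of norms `alphaD p x y` and `a * angularD x y`, differ by `(a - b) • v`, whose
norm is `|a - b|`. Exchanging `x` and `y` gives the same estimate with `b` in place of `a`, and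
both `max ‖x‖ ‖y‖` and `min ‖x‖ ‖y‖` are one of the two norms.
-/

theorem abs_norm_smul_sub_smul_sub_norm_smul_sub_le {R E : Type*} [SeminormedRing R]
    [SeminormedAddCommGroup E] [Module R E] [IsBoundedSMul R E] (a b : R) (u v : E) :
    |‖a • u - b • v‖ - ‖a • (u - v)‖| ≤ ‖a - b‖ * ‖v‖ := by
  have hdiff : a • u - b • v - a • (u - v) = (a - b) • v := by
    rw [smul_sub, sub_smul, sub_sub_sub_cancel_left]
  calc |‖a • u - b • v‖ - ‖a • (u - v)‖|
      ≤ ‖a • u - b • v - a • (u - v)‖ := abs_norm_sub_norm_le _ _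
    _ = ‖(a - b) • v‖ := by rw [hdiff]
    _ ≤ ‖a - b‖ * ‖v‖ := norm_smul_le _ _

section AngularDistance

variable {X : Type*} [NormedAddCommGroup X] [NormedSpace ℝ X] {x y : X}

theorem alphaD_comm (p : ℝ) (x y : X) : alphaD p x y = alphaD p y x :=
  norm_sub_rev _ _

theorem angularD_comm (x y : X) : angularD x y = angularD y x :=
  norm_sub_rev _ _

theorem norm_rpow_sub_one_smul (hx : x ≠ 0) (p : ℝ) :
    ‖x‖ ^ (p - 1) • x = ‖x‖ ^ p • ‖x‖⁻¹ • x := by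
  rw [Real.rpow_sub_one (norm_ne_zero_iff.mpr hx), div_eq_mul_inv, mul_smul]

theorem abs_alphaD_sub_norm_rpow_mul_angularD_le (hx : x ≠ 0) (hy : y ≠ 0) (p : ℝ) :
    |alphaD p x y - ‖x‖ ^ p * angularD x y| ≤ |‖x‖ ^ p - ‖y‖ ^ p| := by
  have h_alpha : alphaD p x y = ‖‖x‖ ^ p • ‖x‖⁻¹ • x - ‖y‖ ^ p • ‖y‖⁻¹ • y‖ := by
    rw [alphaD, norm_rpow_sub_one_smul hx, norm_rpow_sub_one_smul hy]
  have h_angular : ‖x‖ ^ p * angularD x y = ‖‖x‖ ^ p • (‖x‖⁻¹ • x - ‖y‖⁻¹ • y)‖ := by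
    rw [angularD, norm_smul_of_nonneg (by positivity)]
  have h_unit : ‖‖y‖⁻¹ • y‖ = 1 := norm_smul_inv_norm (𝕜 := ℝ) hy
  simpa only [h_alpha, h_angular, h_unit, mul_one, Real.norm_eq_abs] using
    abs_norm_smul_sub_smul_sub_norm_smul_sub_le (‖x‖ ^ p) (‖y‖ ^ p) (‖x‖⁻¹ • x) (‖y‖⁻¹ • y)

theorem pAngular_vs_angular_bounds_general (hx : x ≠ 0) (hy : y ≠ 0) (p : ℝ) {c : ℝ}
    (hc : c = ‖x‖ ∨ c = ‖y‖) :
    c ^ p * angularD x y - |‖x‖ ^ p - ‖y‖ ^ p| ≤ alphaD p x y ∧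
      alphaD p x y ≤ c ^ p * angularD x y + |‖x‖ ^ p - ‖y‖ ^ p| := by
  rw [← Set.mem_Icc, ← Set.mem_Icc_iff_abs_le, abs_sub_comm]
  rcases hc with rfl | rfl
  · exact abs_alphaD_sub_norm_rpow_mul_angularD_le hx hy p
  · rw [alphaD_comm, angularD_comm, abs_sub_comm (‖x‖ ^ p)]
    exact abs_alphaD_sub_norm_rpow_mul_angularD_le hy hx p

end AngularDistance

theorem pAngular_vs_angular_bounds
    {X : Type*} [NormedAddCommGroup X] [NormedSpace ℝ X]
    (x y : X) (hx : x ≠ 0) (hy : y ≠ 0) (p : ℝ) :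
    (0 ≤ p →
      (max ‖x‖ ‖y‖) ^ p * angularD x y - |‖x‖ ^ p - ‖y‖ ^ p| ≤ alphaD p x y ∧
      alphaD p x y ≤ (min ‖x‖ ‖y‖) ^ p * angularD x y + |‖x‖ ^ p - ‖y‖ ^ p|) ∧
    (p < 0 →
      (min ‖x‖ ‖y‖) ^ p * angularD x y - |‖x‖ ^ p - ‖y‖ ^ p| ≤ alphaD p x y ∧
      alphaD p x y ≤ (max ‖x‖ ‖y‖) ^ p * angularD x y + |‖x‖ ^ p - ‖y‖ ^ p|) := by
  have hmax := pAngular_vs_angular_bounds_general hx hy p (max_choice ‖x‖ ‖y‖)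
  have hmin := pAngular_vs_angular_bounds_general hx hy p (min_choice ‖x‖ ‖y‖)
  exact ⟨fun _ ↦ ⟨hmax.1, hmin.2⟩, fun _ ↦ ⟨hmin.1, hmax.2⟩⟩
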